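/- arXiv:2005.08895 — 7 statements merged into one kernel-verified Lean document; each statement's English description precedes it below -/
import Mathlib

section
/- Let n ≥ 1 and let φ : ℝⁿ → ℝⁿ be twice continuously differentiable. Then the following are equivalent: (i) for every twice continuously differentiable function I : ℝⁿ → ℝ, every x ∈ ℝⁿ and all v, w ∈ ℝⁿ, the second derivative satisfies D²(I ∘ φ)(x)(v, w) = D²I(φ(x))(Dφ(x)v, Dφ(x)w); (ii) φ is affine, i.e. there exist a linear map A : ℝⁿ → ℝⁿ and a vector b ∈ ℝⁿ such that φ(x) = A x + b for all x. (This expresses that the affine transformations are exactly the transformations of V preserving the variance form σ₂, whose value on a Legendrian submanifold given by a function I is the Hessian form D²I.) -/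
/-- Let `φ : ℝⁿ → ℝⁿ` (`n ≥ 1`) be twice continuously differentiable.  Then `φ`
preserves the Hessian (variance) form of every twice continuously differentiable
function `I : ℝⁿ → ℝ`, in the sense that
`D²(I ∘ φ)(x)(v, w) = D²I(φ(x))(Dφ(x)v, Dφ(x)w)` for all `x, v, w`,
if and only if `φ` is affine, i.e. `φ(x) = A x + b` for a linear map `A` and a
vector `b`. -/
theorem affine_iff_preserves_hessian (n : ℕ) (hn : 1 ≤ n)
    (φ : (Fin n → ℝ) → (Fin n → ℝ)) (hφ : ContDiff ℝ 2 φ) :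
    (∀ I : (Fin n → ℝ) → ℝ, ContDiff ℝ 2 I →
        ∀ x v w : Fin n → ℝ,
          fderiv ℝ (fderiv ℝ (I ∘ φ)) x v w =
            fderiv ℝ (fderiv ℝ I) (φ x) (fderiv ℝ φ x v) (fderiv ℝ φ x w)) ↔
      (∃ (A : (Fin n → ℝ) →ₗ[ℝ] (Fin n → ℝ)) (b : Fin n → ℝ),
        ∀ x, φ x = A x + b) := by
  constructor
  · intro h
    have key : ∀ i : Fin n, ∀ x, φ x i = fderiv ℝ (fun y => φ y i) 0 x + φ 0 i := by
      intro i
      have hc : ContDiff ℝ 2 (fun y => φ y i) := (contDiff_pi.1 hφ) i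
      have hd : Differentiable ℝ (fun y => φ y i) := hc.differentiable (by norm_num)
      have hd2 : Differentiable ℝ (fderiv ℝ (fun y => φ y i)) :=
        (hc.fderiv_right (m := 1) (by norm_num)).differentiable (by norm_num)
      let P : (Fin n → ℝ) →L[ℝ] ℝ := ContinuousLinearMap.proj i
      have hP : fderiv ℝ (fun y => P y) = fun _ => P := by
        funext y
        exact P.fderiv
      have h0 : ∀ x, fderiv ℝ (fderiv ℝ (fun y => φ y i)) x = 0 := by
        intro x
        ext1 v
        ext1 w
        have := h (fun y => P y) P.contDiff x v w
        rw [hP] at this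
        have e : ((fun y => P y) ∘ φ) = fun y => φ y i := rfl
        rw [e] at this
        simpa using this
      have hconst : ∀ x, fderiv ℝ (fun y => φ y i) x = fderiv ℝ (fun y => φ y i) 0 :=
        fun x => is_const_of_fderiv_eq_zero hd2 h0 x 0
      intro x
      set L := fderiv ℝ (fun y => φ y i) 0 with hL
      have hh : ∀ y, HasFDerivAt (fun y => φ y i - L y) (0 : (Fin n → ℝ) →L[ℝ] ℝ) y := by
        intro y
        have h1 := (hd y).hasFDerivAt.sub L.hasFDerivAt
        rw [hconst y, sub_self] at h1
        exact h1
      have := is_const_of_fderiv_eq_zero (𝕜 := ℝ)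
        (fun y => (hh y).differentiableAt) (fun y => (hh y).fderiv) x 0
      simp only [map_zero] at this
      linarith
    refine ⟨LinearMap.pi fun i => (fderiv ℝ (fun y => φ y i) 0).toLinearMap, φ 0, ?_⟩
    intro x
    funext i
    simpa using key i x
  · rintro ⟨A, b, hA⟩ I hI x v w
    let B : (Fin n → ℝ) →L[ℝ] (Fin n → ℝ) := LinearMap.toContinuousLinearMap A
    have hB : ∀ y, HasFDerivAt φ B y := by
      intro y
      have : φ = fun y => B y + b := funext hA
      rw [this]
      exact B.hasFDerivAt.add_const b
    have hd : Differentiable ℝ I := hI.differentiable (by norm_num)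
    have hd2 : Differentiable ℝ (fderiv ℝ I) :=
      (hI.fderiv_right (m := 1) (by norm_num)).differentiable (by norm_num)
    have h1 : fderiv ℝ (I ∘ φ) = fun y => (fderiv ℝ I (φ y)).comp B := by
      funext y
      exact ((hd (φ y)).hasFDerivAt.comp y (hB y)).fderiv
    have h2 := ((hd2 (φ x)).hasFDerivAt.comp x (hB x)).clm_comp (hasFDerivAt_const B x)
    have h3 := h2.fderiv
    simp only [Function.comp_apply] at h3
    rw [h1, h3, (hB x).fderiv]
    simp
end

section
/- Let (Ω, 𝒜, μ₀) be a probability space, X : Ω → ℝⁿ measurable, and λ ∈ ℝⁿ such that Z(λ) = ∫_Ω exp⟨λ, X⟩ dμ₀ is finite and positive and X·exp⟨λ, X⟩ is μ₀-integrable. Set ρ_λ = exp⟨λ, X⟩ / Z(λ) and x = ∫_Ω X ρ_λ dμ₀ ∈ ℝⁿ. Then ∫_Ω ρ_λ log ρ_λ dμ₀ = ⟨λ, x⟩ − log Z(λ), and for every measurable ρ : Ω → [0, ∞) satisfying ∫_Ω ρ dμ₀ = 1, with X·ρ μ₀-integrable and ∫_Ω X ρ dμ₀ = x, and with ρ log ρ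 μ₀-integrable, one has ∫_Ω ρ log ρ dμ₀ ≥ ⟨λ, x⟩ − log Z(λ), with equality if and only if ρ = ρ_λ μ₀-almost everywhere. (Thus the density of exponential form minimizes the information gain among all densities measuring the same point x, which is the principle of minimal information gain.) -/
open MeasureTheory
open scoped InnerProductSpace

theorem mig_aux {a b : ℝ} (ha : 0 ≤ a) (hb : 0 < b) :
    0 ≤ a * Real.log a - a * Real.log b - a + b ∧
      (a * Real.log a - a * Real.log b - a + b = 0 → a = b) := by
  rcases ha.eq_or_lt with h | h
  · subst h
    simp only [zero_mul, sub_zero, zero_add]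
    exact ⟨hb.le, fun h => h.symm⟩
  · have hd : 0 < b / a := div_pos hb h
    have hl : Real.log (b / a) = Real.log b - Real.log a := Real.log_div hb.ne' h.ne'
    have hm : a * (b / a) = b := by field_simp
    have key : a * Real.log a - a * Real.log b - a + b
        = a * (b / a - 1 - Real.log (b / a)) := by
      rw [hl]; linear_combination -hm
    rw [key]
    constructor
    · have := Real.log_le_sub_one_of_pos hd
      exact mul_nonneg ha (by linarith)
    · intro h0
      by_contra hne
      have hne' : b / a ≠ 1 := by
        intro h1
        rw [h1] at hm
        exact hne (by linarith)
      have := Real.log_lt_sub_one_of_pos hd hne'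
      have : 0 < a * (b / a - 1 - Real.log (b / a)) := mul_pos h (by linarith)
      linarith

/-- Principle of minimal information gain: on a probability space `(Ω, 𝒜, μ₀)`
with random vector `X : Ω → ℝⁿ` and `λ ∈ ℝⁿ` such that the partition function
`Z = ∫ exp⟨λ, X⟩ dμ₀` is finite and positive and `X·exp⟨λ, X⟩` is integrable,
the tilted density `ρ_λ = exp⟨λ, X⟩/Z` measuring the point
`x = ∫ X ρ_λ dμ₀` satisfies `∫ ρ_λ log ρ_λ dμ₀ = ⟨λ, x⟩ − log Z`, and every
probability density `ρ` measuring the same point `x` (with `ρ log ρ`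
integrable) has information gain `∫ ρ log ρ dμ₀ ≥ ⟨λ, x⟩ − log Z`, with
equality iff `ρ = ρ_λ` almost everywhere. -/
theorem minimal_information_gain {n : ℕ} {Ω : Type*} [MeasurableSpace Ω]
    (μ₀ : Measure Ω) [IsProbabilityMeasure μ₀]
    (X : Ω → EuclideanSpace ℝ (Fin n)) (hX : Measurable X)
    (l : EuclideanSpace ℝ (Fin n))
    (Z : ℝ) (hZ : Z = ∫ ω, Real.exp ⟪l, X ω⟫_ℝ ∂μ₀)
    (hZfin : Integrable (fun ω => Real.exp ⟪l, X ω⟫_ℝ) μ₀)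
    (hZpos : 0 < Z)
    (hXexp : Integrable (fun ω => Real.exp ⟪l, X ω⟫_ℝ • X ω) μ₀)
    (ρl : Ω → ℝ) (hρl : ρl = fun ω => Real.exp ⟪l, X ω⟫_ℝ / Z)
    (x : EuclideanSpace ℝ (Fin n)) (hx : x = ∫ ω, ρl ω • X ω ∂μ₀) :
    (∫ ω, ρl ω * Real.log (ρl ω) ∂μ₀) = ⟪l, x⟫_ℝ - Real.log Z ∧
      ∀ ρ : Ω → ℝ, Measurable ρ → (∀ ω, 0 ≤ ρ ω) →
        (∫ ω, ρ ω ∂μ₀) = 1 →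
        Integrable (fun ω => ρ ω • X ω) μ₀ →
        (∫ ω, ρ ω • X ω ∂μ₀) = x →
        Integrable (fun ω => ρ ω * Real.log (ρ ω)) μ₀ →
        (⟪l, x⟫_ℝ - Real.log Z ≤ ∫ ω, ρ ω * Real.log (ρ ω) ∂μ₀ ∧
          ((∫ ω, ρ ω * Real.log (ρ ω) ∂μ₀) = ⟪l, x⟫_ℝ - Real.log Z ↔
            ρ =ᵐ[μ₀] ρl)) := by
  have hpos : ∀ ω, 0 < ρl ω := fun ω => by
    rw [hρl]; exact div_pos (Real.exp_pos _) hZpos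
  have hlog : ∀ ω, Real.log (ρl ω) = ⟪l, X ω⟫_ℝ - Real.log Z := fun ω => by
    rw [hρl]
    simp only
    rw [Real.log_div (Real.exp_pos _).ne' hZpos.ne', Real.log_exp]
  have hρlint : Integrable ρl μ₀ := by
    rw [hρl]; exact hZfin.div_const Z
  have hρl1 : ∫ ω, ρl ω ∂μ₀ = 1 := by
    rw [hρl]
    simp only
    rw [integral_div, ← hZ, div_self hZpos.ne']
  have hρlX : Integrable (fun ω => ρl ω • X ω) μ₀ := by
    have h := hXexp.smul (Z⁻¹)
    refine h.congr (Filter.Eventually.of_forall fun ω => ?_)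
    simp only [hρl, Pi.smul_apply, smul_smul]
    rw [div_eq_inv_mul]
  have E : ∀ ρ : Ω → ℝ, (∫ ω, ρ ω ∂μ₀) = 1 → Integrable (fun ω => ρ ω • X ω) μ₀ →
      (∫ ω, ρ ω • X ω ∂μ₀) = x →
      Integrable (fun ω => ρ ω * Real.log (ρl ω)) μ₀ ∧
        ∫ ω, ρ ω * Real.log (ρl ω) ∂μ₀ = ⟪l, x⟫_ℝ - Real.log Z := by
    intro ρ h1 h2 h3
    have hi : Integrable ρ μ₀ := by
      by_contra h
      rw [integral_undef h] at h1
      exact zero_ne_one h1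
    have hfun : (fun ω => ρ ω * Real.log (ρl ω))
        = fun ω => ⟪l, ρ ω • X ω⟫_ℝ - ρ ω * Real.log Z := by
      funext ω
      rw [hlog, inner_smul_right, mul_sub]
    have hi1 : Integrable (fun ω => ⟪l, ρ ω • X ω⟫_ℝ) μ₀ := h2.const_inner l
    have hi2 : Integrable (fun ω => ρ ω * Real.log Z) μ₀ := hi.mul_const _
    rw [hfun]
    refine ⟨hi1.sub hi2, ?_⟩
    rw [integral_sub hi1 hi2, integral_inner h2, h3, integral_mul_const, h1, one_mul]
  have first := (E ρl hρl1 hρlX hx.symm).2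
  refine ⟨first, ?_⟩
  intro ρ _ h0 h1 h2 h3 h4
  obtain ⟨e1, e2⟩ := E ρ h1 h2 h3
  have hi : Integrable ρ μ₀ := by
    by_contra h
    rw [integral_undef h] at h1
    exact zero_ne_one h1
  have i1 : Integrable (fun ω => ρ ω * Real.log (ρ ω) - ρ ω * Real.log (ρl ω)) μ₀ := h4.sub e1
  have i2 : Integrable
      (fun ω => ρ ω * Real.log (ρ ω) - ρ ω * Real.log (ρl ω) - ρ ω) μ₀ := i1.sub hi
  have i3 : Integrable
      (fun ω => ρ ω * Real.log (ρ ω) - ρ ω * Real.log (ρl ω) - ρ ω + ρl ω) μ₀ := i2.add hρlint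
  have hval : ∫ ω, (ρ ω * Real.log (ρ ω) - ρ ω * Real.log (ρl ω) - ρ ω + ρl ω) ∂μ₀
      = (∫ ω, ρ ω * Real.log (ρ ω) ∂μ₀) - (⟪l, x⟫_ℝ - Real.log Z) := by
    rw [integral_add i2 hρlint, integral_sub i1 hi, integral_sub h4 e1, e2, h1, hρl1]
    ring
  have hnn : 0 ≤ fun ω => ρ ω * Real.log (ρ ω) - ρ ω * Real.log (ρl ω) - ρ ω + ρl ω :=
    fun ω => (mig_aux (h0 ω) (hpos ω)).1
  refine ⟨?_, ?_, ?_⟩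
  · have := integral_nonneg (μ := μ₀) hnn
    rw [hval] at this
    linarith
  · intro heq
    rw [heq, sub_self] at hval
    have hz := (integral_eq_zero_iff_of_nonneg hnn i3).1 hval
    filter_upwards [hz] with ω hω
    exact (mig_aux (h0 ω) (hpos ω)).2 hω
  · intro hae
    rw [← first]
    refine integral_congr_ae ?_
    filter_upwards [hae] with ω hω
    rw [hω]
end

section
/- Let U ⊆ {(T, p) ∈ ℝ² : T ≠ 0, p ≠ 0} be open and let e, v : U → ℝ be differentiable functions satisfying the Lagrangian condition e_p + T·v_T + p·v_p = 0 on U. Then, with J₁ = e/T and J₂ = p·v/T, the identity p·∂_p(J₁) + T·∂_T(J₂) + p·∂_p(J₂) = 0 holds at every point of U. (This is the differential syzygy ∇₂(J₁) + ∇₁(J₂) + ∇₂(J₂) = 0 among the generators J₁, J₂ and the invariant derivations ∇₁ = T D_T, ∇₂ = p D_p.) -/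
/-- Let `U ⊆ {(T,p) : T ≠ 0, p ≠ 0}` be open and `e, v : U → ℝ` differentiable
functions satisfying the Lagrangian condition `e_p + T v_T + p v_p = 0`.
Then with `J₁ = e/T`, `J₂ = p·v/T` the syzygy
`p ∂_p(J₁) + T ∂_T(J₂) + p ∂_p(J₂) = 0` holds on `U`, i.e.
`∇₂(J₁) + ∇₁(J₂) + ∇₂(J₂) = 0` for the invariant derivations
`∇₁ = T D_T`, `∇₂ = p D_p`. -/
theorem gas_syzygy (U : Set (ℝ × ℝ)) (hUopen : IsOpen U)
    (hU : ∀ q ∈ U, q.1 ≠ 0 ∧ q.2 ≠ 0)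
    (e v : ℝ × ℝ → ℝ)
    (he : DifferentiableOn ℝ e U) (hv : DifferentiableOn ℝ v U)
    (hlag : ∀ q ∈ U,
      fderiv ℝ e q (0, 1) + q.1 * fderiv ℝ v q (1, 0)
        + q.2 * fderiv ℝ v q (0, 1) = 0)
    (J₁ J₂ : ℝ × ℝ → ℝ)
    (hJ₁ : ∀ q, J₁ q = e q / q.1)
    (hJ₂ : ∀ q, J₂ q = q.2 * v q / q.1) :
    ∀ q ∈ U,
      q.2 * fderiv ℝ J₁ q (0, 1) + q.1 * fderiv ℝ J₂ q (1, 0)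
        + q.2 * fderiv ℝ J₂ q (0, 1) = 0 := by
  intro q hq
  obtain ⟨hT, hp⟩ := hU q hq
  have hl := hlag q hq
  have he' := (he.differentiableAt (hUopen.mem_nhds hq)).hasFDerivAt
  have hv' := (hv.differentiableAt (hUopen.mem_nhds hq)).hasFDerivAt
  have h1 : HasFDerivAt (fun x : ℝ × ℝ => x.1) (ContinuousLinearMap.fst ℝ ℝ ℝ) q :=
    hasFDerivAt_fst
  have h2 : HasFDerivAt (fun x : ℝ × ℝ => x.2) (ContinuousLinearMap.snd ℝ ℝ ℝ) q :=
    hasFDerivAt_snd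
  have hi := (hasDerivAt_inv hT).comp_hasFDerivAt q h1
  have e1 : J₁ = e * ((fun y => y⁻¹) ∘ fun x : ℝ × ℝ => x.1) := by
    funext x; simp [hJ₁, div_eq_mul_inv]
  have e2 : J₂ = ((fun x : ℝ × ℝ => x.2) * v) * ((fun y => y⁻¹) ∘ fun x : ℝ × ℝ => x.1) := by
    funext x; simp [hJ₂, div_eq_mul_inv]
  have d1 := (he'.mul hi).fderiv
  have d2 := ((h2.mul hv').mul hi).fderiv
  rw [e1, e2, d1, d2]
  simp
  field_simp
  linear_combination q.2 * hl
end

section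
/- Let U = {(T, p) ∈ ℝ² : T > 0, p > 0} and let C ∈ ℝ. Smooth functions e, v : U → ℝ satisfy the system e_p + T·v_T + p·v_p = 0 and p·v_T + e_T = C on U if and only if there exist smooth functions f₁, f₂ : (0, ∞) → ℝ such that e(T, p) = f₁(p)·T − f₂′(p)·p² and v(T, p) = (C − f₁(p))·T/p + f₂′(p)·p + f₂(p) for all (T, p) ∈ U. (These are exactly the thermodynamic states of constant heat capacity C.) -/
theorem aux_const (φ : ℝ → ℝ) (h : ∀ t, 0 < t → HasDerivAt φ 0 t) (t : ℝ) (ht : 0 < t) :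
    φ t = φ 1 := by
  refine IsOpen.is_const_of_deriv_eq_zero (isOpen_Ioi (a := (0:ℝ)))
    (convex_Ioi (0:ℝ)).isPreconnected ?_ ?_ (Set.mem_Ioi.2 ht) (Set.mem_Ioi.2 one_pos)
  · intro x hx
    exact (h x hx).differentiableAt.differentiableWithinAt
  · intro x hx
    exact (h x hx).deriv

theorem aux_part1 (F : ℝ × ℝ → ℝ) (t p : ℝ) (h : DifferentiableAt ℝ F (t, p)) :
    HasDerivAt (fun s => F (s, p)) (fderiv ℝ F (t, p) (1, 0)) t :=
  HasFDerivAt.comp_hasDerivAt (f := fun s : ℝ => (s, p)) t h.hasFDerivAt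
    ((hasDerivAt_id t).prodMk (hasDerivAt_const t p))

theorem aux_part2 (F : ℝ × ℝ → ℝ) (t p : ℝ) (h : DifferentiableAt ℝ F (t, p)) :
    HasDerivAt (fun s => F (t, s)) (fderiv ℝ F (t, p) (0, 1)) p :=
  HasFDerivAt.comp_hasDerivAt (f := fun s : ℝ => (t, s)) p h.hasFDerivAt
    ((hasDerivAt_const p t).prodMk (hasDerivAt_id p))

theorem aux_smooth (F : ℝ × ℝ → ℝ)
    (hF : ContDiffOn ℝ (⊤ : ℕ∞) F (Set.Ioi (0:ℝ) ×ˢ Set.Ioi (0:ℝ))) :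
    ContDiffOn ℝ (⊤ : ℕ∞) (fun p => F (1, p)) (Set.Ioi 0) := by
  refine hF.comp (f := fun p : ℝ => ((1:ℝ), p)) (by fun_prop) ?_
  intro p hp
  exact ⟨Set.mem_Ioi.2 one_pos, hp⟩

theorem aux_deriv (f : ℝ → ℝ) (hf : ContDiffOn ℝ (⊤ : ℕ∞) f (Set.Ioi 0)) :
    ContDiffOn ℝ (⊤ : ℕ∞) (deriv f) (Set.Ioi 0) :=
  hf.deriv_of_isOpen isOpen_Ioi (by simp)

theorem aux_diff (f : ℝ → ℝ) (hf : ContDiffOn ℝ (⊤ : ℕ∞) f (Set.Ioi 0)) (p : ℝ) (hp : 0 < p) :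
    HasDerivAt f (deriv f p) p :=
  ((hf.differentiableOn (by simp)).differentiableAt (Ioi_mem_nhds hp)).hasDerivAt

/-- Let `U = {(T,p) : T > 0, p > 0}` and `C ∈ ℝ`.  Smooth functions
`e, v : U → ℝ` satisfy `e_p + T v_T + p v_p = 0` and `p v_T + e_T = C` on `U`
if and only if there are smooth functions `f₁, f₂ : (0,∞) → ℝ` with
`e = f₁(p) T − f₂′(p) p²` and `v = (C − f₁(p)) T/p + f₂′(p) p + f₂(p)`.
These are exactly the thermodynamic states of constant heat capacity `C`. -/
theorem constant_heat_capacity_states (C : ℝ) (e v : ℝ × ℝ → ℝ)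
    (he : ContDiffOn ℝ (⊤ : ℕ∞) e (Set.Ioi (0:ℝ) ×ˢ Set.Ioi (0:ℝ)))
    (hv : ContDiffOn ℝ (⊤ : ℕ∞) v (Set.Ioi (0:ℝ) ×ˢ Set.Ioi (0:ℝ))) :
    (∀ q ∈ Set.Ioi (0:ℝ) ×ˢ Set.Ioi (0:ℝ),
        fderiv ℝ e q (0, 1) + q.1 * fderiv ℝ v q (1, 0)
          + q.2 * fderiv ℝ v q (0, 1) = 0 ∧
        q.2 * fderiv ℝ v q (1, 0) + fderiv ℝ e q (1, 0) = C) ↔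
      ∃ f₁ f₂ : ℝ → ℝ,
        ContDiffOn ℝ (⊤ : ℕ∞) f₁ (Set.Ioi 0) ∧ ContDiffOn ℝ (⊤ : ℕ∞) f₂ (Set.Ioi 0) ∧
        ∀ q ∈ Set.Ioi (0:ℝ) ×ˢ Set.Ioi (0:ℝ),
          e q = f₁ q.2 * q.1 - deriv f₂ q.2 * q.2 ^ 2 ∧
          v q = (C - f₁ q.2) * q.1 / q.2 + deriv f₂ q.2 * q.2 + f₂ q.2 := by
  have hU : IsOpen (Set.Ioi (0:ℝ) ×ˢ Set.Ioi (0:ℝ)) := isOpen_Ioi.prod isOpen_Ioi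
  have hde : ∀ t p : ℝ, 0 < t → 0 < p → DifferentiableAt ℝ e (t, p) := fun t p ht hp =>
    (he.differentiableOn (by simp)).differentiableAt (hU.mem_nhds ⟨ht, hp⟩)
  have hdv : ∀ t p : ℝ, 0 < t → 0 < p → DifferentiableAt ℝ v (t, p) := fun t p ht hp =>
    (hv.differentiableOn (by simp)).differentiableAt (hU.mem_nhds ⟨ht, hp⟩)
  constructor
  · intro H
    have hw : ∀ t p : ℝ, 0 < t → 0 < p →
        e (t, p) + p * v (t, p) - C * t = e (1, p) + p * v (1, p) - C * 1 := by
      intro t p ht hp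
      refine aux_const (fun t => e (t, p) + p * v (t, p) - C * t) ?_ t ht
      intro s hs
      have h2 := (H (s, p) ⟨hs, hp⟩).2
      refine (((aux_part1 e s p (hde s p hs hp)).add
        ((aux_part1 v s p (hdv s p hs hp)).const_mul p)).sub
        ((hasDerivAt_id s).const_mul C)).congr_deriv ?_
      simp only at h2
      linarith
    obtain ⟨g, hg⟩ : ∃ g : ℝ → ℝ, g = fun p => e (1, p) + p * v (1, p) - C * 1 := ⟨_, rfl⟩
    have hgs : ContDiffOn ℝ (⊤ : ℕ∞) g (Set.Ioi 0) := by
      rw [hg]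
      exact ((aux_smooth e he).add (contDiffOn_id.mul (aux_smooth v hv))).sub contDiffOn_const
    have hw' : ∀ t p : ℝ, 0 < t → 0 < p → e (t, p) + p * v (t, p) - C * t = g p := by
      intro t p ht hp
      rw [hw t p ht hp, hg]
    have hgd : ∀ t p : ℝ, 0 < t → 0 < p →
        deriv g p = v (t, p) - t * fderiv ℝ v (t, p) (1, 0) := by
      intro t p ht hp
      have h1 := (H (t, p) ⟨ht, hp⟩).1
      have hd : HasDerivAt (fun s => e (t, s) + s * v (t, s) - C * t)
          (fderiv ℝ e (t, p) (0, 1) + (1 * v (t, p) + p * fderiv ℝ v (t, p) (0, 1))) p :=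
        ((aux_part2 e t p (hde t p ht hp)).add
          ((hasDerivAt_id p).mul (aux_part2 v t p (hdv t p ht hp)))).sub_const _
      have hd2 := hd.congr_of_eventuallyEq (f₁ := g) (by
        filter_upwards [Ioi_mem_nhds hp] with s hs
        exact (hw' t s ht hs).symm)
      rw [hd2.deriv]
      simp only at h1
      linarith
    have hvt : ∀ t p : ℝ, 0 < t → 0 < p → v (t, p) = (v (1, p) - deriv g p) * t + deriv g p := by
      intro t p ht hp
      have := aux_const (fun t => (v (t, p) - deriv g p) / t) (by
        intro s hs
        refine (((aux_part1 v s p (hdv s p hs hp)).sub_const (deriv g p)).div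
          (hasDerivAt_id s) hs.ne').congr_deriv ?_
        rw [hgd s p hs hp]
        simp only [id]
        field_simp
        ring) t ht
      simp only [div_one] at this
      rw [← this]
      field_simp
      ring
    refine ⟨fun p => C - p * (v (1, p) - deriv g p), fun p => g p / p, ?_, ?_, ?_⟩
    · exact contDiffOn_const.sub (contDiffOn_id.mul ((aux_smooth v hv).sub (aux_deriv g hgs)))
    · exact hgs.div contDiffOn_id (fun x hx => (Set.mem_Ioi.1 hx).ne')
    · rintro ⟨t, p⟩ ⟨ht, hp⟩
      simp only [Set.mem_Ioi] at ht hp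
      have hq : deriv (fun p => g p / p) p = (deriv g p * p - g p * 1) / p ^ 2 :=
        ((aux_diff g hgs p hp).div (hasDerivAt_id p) hp.ne').deriv
      have h1 := hw' t p ht hp
      have h2 := hvt t p ht hp
      simp only [hq]
      constructor
      · have : e (t, p) = g p + C * t - p * v (t, p) := by linarith
        rw [this, h2]
        field_simp
        ring
      · rw [h2]
        field_simp
        ring
  · rintro ⟨f₁, f₂, h₁, h₂, H⟩ ⟨t, p⟩ ⟨ht, hp⟩
    simp only [Set.mem_Ioi] at ht hp
    have d1 := aux_diff f₁ h₁ p hp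
    have d2 := aux_diff f₂ h₂ p hp
    have d3 := aux_diff _ (aux_deriv f₂ h₂) p hp
    have hp0 := hp.ne'
    have eT : fderiv ℝ e (t, p) (1, 0) = f₁ p := by
      refine (aux_part1 e t p (hde t p ht hp)).unique ?_
      have hd : HasDerivAt (fun s => f₁ p * s - deriv f₂ p * p ^ 2) (f₁ p * 1) t :=
        ((hasDerivAt_id t).const_mul _).sub_const _
      rw [mul_one] at hd
      refine hd.congr_of_eventuallyEq ?_
      filter_upwards [Ioi_mem_nhds ht] with s hs
      exact (H (s, p) ⟨hs, hp⟩).1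
    have vT : fderiv ℝ v (t, p) (1, 0) = (C - f₁ p) * 1 / p := by
      refine (aux_part1 v t p (hdv t p ht hp)).unique ?_
      have hd : HasDerivAt (fun s => (C - f₁ p) * s / p + deriv f₂ p * p + f₂ p)
          ((C - f₁ p) * 1 / p) t :=
        ((((hasDerivAt_id t).const_mul _).div_const _).add_const _).add_const _
      refine hd.congr_of_eventuallyEq ?_
      filter_upwards [Ioi_mem_nhds ht] with s hs
      exact (H (s, p) ⟨hs, hp⟩).2
    have eP : fderiv ℝ e (t, p) (0, 1) = deriv f₁ p * t
        - (deriv (deriv f₂) p * p ^ 2 + deriv f₂ p * (2 * p)) := by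
      refine (aux_part2 e t p (hde t p ht hp)).unique ?_
      have hd : HasDerivAt (fun s => f₁ s * t - deriv f₂ s * s ^ 2) (deriv f₁ p * t
          - (deriv (deriv f₂) p * p ^ 2 + deriv f₂ p * (2 * p))) p :=
        (d1.mul_const t).sub (d3.mul ((hasDerivAt_pow 2 p).congr_deriv (by norm_num)))
      refine hd.congr_of_eventuallyEq ?_
      filter_upwards [Ioi_mem_nhds hp] with s hs
      exact (H (t, s) ⟨ht, hs⟩).1
    have vP : fderiv ℝ v (t, p) (0, 1) = ((-deriv f₁ p) * t * p - (C - f₁ p) * t * 1) / p ^ 2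
        + (deriv (deriv f₂) p * p + deriv f₂ p * 1) + deriv f₂ p := by
      refine (aux_part2 v t p (hdv t p ht hp)).unique ?_
      have hd : HasDerivAt (fun s => (C - f₁ s) * t / s + deriv f₂ s * s + f₂ s)
          (((-deriv f₁ p) * t * p - (C - f₁ p) * t * 1) / p ^ 2
        + (deriv (deriv f₂) p * p + deriv f₂ p * 1) + deriv f₂ p) p :=
        ((((d1.const_sub C).mul_const t).div (hasDerivAt_id p) hp0).add
          (d3.mul (hasDerivAt_id p))).add d2
      refine hd.congr_of_eventuallyEq ?_
      filter_upwards [Ioi_mem_nhds hp] with s hs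
      exact (H (t, s) ⟨ht, hs⟩).2
    simp only [eT, vT, eP, vP]
    constructor
    · field_simp
      ring
    · field_simp
      ring
end

section
/- Let U = {(T, p) ∈ ℝ² : T > 0, p > 0}. Differentiable functions e, v : U → ℝ satisfy the five equations T·v_T + p·v_p + e_p = 0, e = T·e_T, e_p = 0, v = T·v_T, and v = −p·v_p on U if and only if there exist constants C₁, C₂ ∈ ℝ such that e(T, p) = C₁·T and v(T, p) = C₂·T/p for all (T, p) ∈ U, i.e. if and only if the state is an ideal gas (e = C₁T and pv = C₂T). (Thus the ideal gases are exactly the Lagrangian submanifolds invariant under the two-dimensional group generated by e∂_e + T∂_T + p∂_p and v∂_v − p∂_p.) -/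
lemma const_of_partials (g : ℝ × ℝ → ℝ) (dg : ℝ × ℝ → (ℝ × ℝ →L[ℝ] ℝ))
    (hg : ∀ q ∈ Set.Ioi (0:ℝ) ×ˢ Set.Ioi (0:ℝ), HasFDerivAt g (dg q) q)
    (h1 : ∀ q ∈ Set.Ioi (0:ℝ) ×ˢ Set.Ioi (0:ℝ), dg q (1, 0) = 0)
    (h2 : ∀ q ∈ Set.Ioi (0:ℝ) ×ˢ Set.Ioi (0:ℝ), dg q (0, 1) = 0) :
    ∀ q ∈ Set.Ioi (0:ℝ) ×ˢ Set.Ioi (0:ℝ), g q = g (1, 1) := by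
  intro q hq
  have hO : IsOpen (Set.Ioi (0:ℝ) ×ˢ Set.Ioi (0:ℝ)) := isOpen_Ioi.prod isOpen_Ioi
  have hC : IsPreconnected (Set.Ioi (0:ℝ) ×ˢ Set.Ioi (0:ℝ)) :=
    ((convex_Ioi 0).prod (convex_Ioi 0)).isPreconnected
  refine hO.is_const_of_fderiv_eq_zero (𝕜 := ℝ) hC
    (fun x hx => (hg x hx).differentiableAt.differentiableWithinAt) ?_ hq (by simp)
  intro x hx
  rw [(hg x hx).fderiv]
  ext
  · simpa using h1 x hx
  · simpa using h2 x hx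

/-- Let `U = {(T,p) : T > 0, p > 0}`.  Differentiable functions `e, v : U → ℝ`
satisfy the five equations `T v_T + p v_p + e_p = 0`, `e = T e_T`, `e_p = 0`,
`v = T v_T`, `v = −p v_p` on `U` if and only if there are constants
`C₁, C₂ ∈ ℝ` with `e = C₁ T` and `v = C₂ T/p`, i.e. iff the state is an ideal
gas (`e = C₁T`, `pv = C₂T`).  Thus ideal gases are exactly the Lagrangian
submanifolds invariant under the two-dimensional group generated by
`e∂_e + T∂_T + p∂_p` and `v∂_v − p∂_p`. -/
theorem ideal_gases_are_invariant_states (e v : ℝ × ℝ → ℝ)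
    (he : DifferentiableOn ℝ e (Set.Ioi (0:ℝ) ×ˢ Set.Ioi (0:ℝ)))
    (hv : DifferentiableOn ℝ v (Set.Ioi (0:ℝ) ×ˢ Set.Ioi (0:ℝ))) :
    (∀ q ∈ Set.Ioi (0:ℝ) ×ˢ Set.Ioi (0:ℝ),
        q.1 * fderiv ℝ v q (1, 0) + q.2 * fderiv ℝ v q (0, 1)
          + fderiv ℝ e q (0, 1) = 0 ∧
        e q = q.1 * fderiv ℝ e q (1, 0) ∧
        fderiv ℝ e q (0, 1) = 0 ∧
        v q = q.1 * fderiv ℝ v q (1, 0) ∧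
        v q = -(q.2 * fderiv ℝ v q (0, 1))) ↔
      ∃ C₁ C₂ : ℝ, ∀ q ∈ Set.Ioi (0:ℝ) ×ˢ Set.Ioi (0:ℝ),
        e q = C₁ * q.1 ∧ v q = C₂ * q.1 / q.2 := by
  have hO : IsOpen (Set.Ioi (0:ℝ) ×ˢ Set.Ioi (0:ℝ)) := isOpen_Ioi.prod isOpen_Ioi
  have hinv1 : ∀ q : ℝ × ℝ, q.1 ≠ 0 → HasFDerivAt (fun q : ℝ × ℝ => (q.1)⁻¹)
      ((-(q.1 ^ 2)⁻¹) • ContinuousLinearMap.fst ℝ ℝ ℝ) q :=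
    fun q h => (hasDerivAt_inv h).comp_hasFDerivAt q hasFDerivAt_fst
  have hinv2 : ∀ q : ℝ × ℝ, q.2 ≠ 0 → HasFDerivAt (fun q : ℝ × ℝ => (q.2)⁻¹)
      ((-(q.2 ^ 2)⁻¹) • ContinuousLinearMap.snd ℝ ℝ ℝ) q :=
    fun q h => (hasDerivAt_inv h).comp_hasFDerivAt q hasFDerivAt_snd
  constructor
  · intro H
    have hE := const_of_partials (fun q => e q * (q.1)⁻¹) _
      (fun q hq => ((he.differentiableAt (hO.mem_nhds hq)).hasFDerivAt).mul
        (hinv1 q (ne_of_gt hq.1)))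
      (by
        intro q hq
        obtain ⟨-, h2, -, -, -⟩ := H q hq
        have h0 : q.1 ≠ 0 := ne_of_gt hq.1
        simp
        rw [h2]
        field_simp
        ring)
      (by
        intro q hq
        obtain ⟨-, -, h3, -, -⟩ := H q hq
        simp [h3])
    have hV := const_of_partials (fun q => (v q * q.2) * (q.1)⁻¹) _
      (fun q hq => (((hv.differentiableAt (hO.mem_nhds hq)).hasFDerivAt).mul hasFDerivAt_snd).mul
        (hinv1 q (ne_of_gt hq.1)))
      (by
        intro q hq
        obtain ⟨-, -, -, h4, -⟩ := H q hq
        have h0 : q.1 ≠ 0 := ne_of_gt hq.1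
        simp
        rw [h4]
        field_simp
        ring)
      (by
        intro q hq
        obtain ⟨-, -, -, -, h5⟩ := H q hq
        simp
        rw [h5]
        ring)
    refine ⟨e (1, 1) * (1, 1).1⁻¹, v (1, 1) * (1, 1).2 * (1, 1).1⁻¹, fun q hq => ⟨?_, ?_⟩⟩
    · have h0 : q.1 ≠ 0 := ne_of_gt hq.1
      have := hE q hq
      simp only at this ⊢
      rw [← this]
      field_simp
    · have h0 : q.1 ≠ 0 := ne_of_gt hq.1
      have hp0 : q.2 ≠ 0 := ne_of_gt hq.2
      have := hV q hq
      simp only at this ⊢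
      rw [← this]
      field_simp
  · rintro ⟨C₁, C₂, H⟩ q hq
    have h0 : q.1 ≠ 0 := ne_of_gt hq.1
    have hp0 : q.2 ≠ 0 := ne_of_gt hq.2
    have hEe : e =ᶠ[nhds q] fun q => C₁ * q.1 := by
      filter_upwards [hO.mem_nhds hq] with x hx using (H x hx).1
    have hVe : v =ᶠ[nhds q] fun q => (C₂ * q.1) * (q.2)⁻¹ := by
      filter_upwards [hO.mem_nhds hq] with x hx
      rw [(H x hx).2, div_eq_mul_inv]
    have dE := ((hasFDerivAt_fst (𝕜 := ℝ) (p := q)).const_mul C₁)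
    have dV : HasFDerivAt (fun q : ℝ × ℝ => (C₂ * q.1) * (q.2)⁻¹) _ q :=
      (((hasFDerivAt_fst (𝕜 := ℝ) (p := q)).const_mul C₂)).mul (hinv2 q hp0)
    rw [hEe.fderiv_eq, hVe.fderiv_eq, dE.fderiv, dV.fderiv, (H q hq).1, (H q hq).2]
    refine ⟨?_, ?_, ?_, ?_, ?_⟩ <;> simp <;> try field_simp <;> try ring
end

section
/- Let U ⊆ ℝ² be open and e, v : U → ℝ differentiable, and let I₂(e, v)(T, p) = p·v_T(T, p) + e_T(T, p) denote the heat capacity. Then the heat capacity is invariant under the following transformations of states: (a) for c ∈ ℝ, with ẽ(T, p) = e(T, p−c) − c·v(T, p−c) and ṽ(T, p) = v(T, p−c), one has I₂(ẽ, ṽ)(T, p) = I₂(e, v)(T, p−c); (b) for t > 0, with ẽ(T, p) = t·e(T/t, p/t) and ṽ(T, p) = v(T/t, p/t), one has I₂(ẽ, ṽ)(T, p) = I₂(e, v)(T/t, p/t); (c) for s > 0, with ẽ(T, p) = e(T, s·p) and ṽ(T, p) = s·v(T, s·p), one has I₂(ẽ, ṽ)(T, p) = I₂(e, v)(T, s·p).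 (These transformations are the actions on states of the affine transformations (e, v) ↦ (e − c·v, v), (e, v) ↦ (t·e, v), and (e, v) ↦ (e, s·v) of V, showing that the heat capacity is a differential invariant of the Aff(V)-action.) -/
/-- The heat capacity (at constant pressure) `I₂ = p·v_T + e_T` of a state
given by functions `e, v` of `(T, p)`. -/
noncomputable def heatCapacity (e v : ℝ × ℝ → ℝ) (q : ℝ × ℝ) : ℝ :=
  q.2 * fderiv ℝ v q (1, 0) + fderiv ℝ e q (1, 0)

/-- Chain rule in the direction `T` for a map `q ↦ (g q.1, h q.2)`. -/
theorem hasFDerivAt_comp_coords (f : ℝ × ℝ → ℝ) (g h : ℝ → ℝ) (a b T p : ℝ)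
    (hg : HasDerivAt g a T) (hh : HasDerivAt h b p)
    (hf : DifferentiableAt ℝ f (g T, h p)) :
    DifferentiableAt ℝ (fun q : ℝ × ℝ => f (g q.1, h q.2)) (T, p) ∧
    fderiv ℝ (fun q : ℝ × ℝ => f (g q.1, h q.2)) (T, p) (1, 0) =
      a * fderiv ℝ f (g T, h p) (1, 0) := by
  have h1 : HasFDerivAt (fun q : ℝ × ℝ => g q.1)
      (a • ContinuousLinearMap.fst ℝ ℝ ℝ) (T, p) :=
    HasDerivAt.comp_hasFDerivAt (T, p) (h₂ := g) (f := Prod.fst) hg hasFDerivAt_fst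
  have h2 : HasFDerivAt (fun q : ℝ × ℝ => h q.2)
      (b • ContinuousLinearMap.snd ℝ ℝ ℝ) (T, p) :=
    HasDerivAt.comp_hasFDerivAt (T, p) (h₂ := h) (f := Prod.snd) hh hasFDerivAt_snd
  have h3 : HasFDerivAt (fun q : ℝ × ℝ => f (g q.1, h q.2)) _ (T, p) :=
    HasFDerivAt.comp (T, p) (g := f) (f := fun q : ℝ × ℝ => (g q.1, h q.2))
      hf.hasFDerivAt (h1.prodMk h2)
  refine ⟨h3.differentiableAt, ?_⟩
  rw [h3.fderiv]
  have h4 : ((a, 0) : ℝ × ℝ) = a • ((1, 0) : ℝ × ℝ) := by simp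
  rw [← smul_eq_mul, ← map_smul, ← h4]
  simp

/-- The heat capacity `I₂ = p v_T + e_T` is invariant under the actions on
states of the affine transformations `(e,v) ↦ (e − c·v, v)`,
`(e,v) ↦ (t·e, v)` and `(e,v) ↦ (e, s·v)` of `V`:
(a) for `ẽ(T,p) = e(T,p−c) − c·v(T,p−c)`, `ṽ(T,p) = v(T,p−c)` one has
`I₂(ẽ,ṽ)(T,p) = I₂(e,v)(T,p−c)`;
(b) for `ẽ(T,p) = t·e(T/t,p/t)`, `ṽ(T,p) = v(T/t,p/t)` (`t > 0`) one has
`I₂(ẽ,ṽ)(T,p) = I₂(e,v)(T/t,p/t)`;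
(c) for `ẽ(T,p) = e(T,s·p)`, `ṽ(T,p) = s·v(T,s·p)` (`s > 0`) one has
`I₂(ẽ,ṽ)(T,p) = I₂(e,v)(T,s·p)`. -/
theorem heat_capacity_invariant (U : Set (ℝ × ℝ)) (hUopen : IsOpen U)
    (e v : ℝ × ℝ → ℝ)
    (he : DifferentiableOn ℝ e U) (hv : DifferentiableOn ℝ v U) :
    (∀ c : ℝ, ∀ T p : ℝ, (T, p - c) ∈ U →
      heatCapacity (fun q => e (q.1, q.2 - c) - c * v (q.1, q.2 - c))
          (fun q => v (q.1, q.2 - c)) (T, p) =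
        heatCapacity e v (T, p - c)) ∧
    (∀ t : ℝ, 0 < t → ∀ T p : ℝ, (T / t, p / t) ∈ U →
      heatCapacity (fun q => t * e (q.1 / t, q.2 / t))
          (fun q => v (q.1 / t, q.2 / t)) (T, p) =
        heatCapacity e v (T / t, p / t)) ∧
    (∀ s : ℝ, 0 < s → ∀ T p : ℝ, (T, s * p) ∈ U →
      heatCapacity (fun q => e (q.1, s * q.2))
          (fun q => s * v (q.1, s * q.2)) (T, p) =
        heatCapacity e v (T, s * p)) := by
  have de : ∀ q ∈ U, DifferentiableAt ℝ e q := fun q hq =>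
    he.differentiableAt (hUopen.mem_nhds hq)
  have dv : ∀ q ∈ U, DifferentiableAt ℝ v q := fun q hq =>
    hv.differentiableAt (hUopen.mem_nhds hq)
  refine ⟨fun c T p hU => ?_, fun t ht T p hU => ?_, fun s hs T p hU => ?_⟩
  · have hg : HasDerivAt (fun x : ℝ => x) 1 T := hasDerivAt_id T
    have hh : HasDerivAt (fun x : ℝ => x - c) 1 p := (hasDerivAt_id p).sub_const c
    obtain ⟨e1, e2⟩ := hasFDerivAt_comp_coords e _ _ _ _ T p hg hh (de _ hU)
    obtain ⟨v1, v2⟩ := hasFDerivAt_comp_coords v _ _ _ _ T p hg hh (dv _ hU)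
    unfold heatCapacity
    rw [fderiv_fun_sub e1 (v1.const_mul c), fderiv_const_mul v1]
    simp only [sub_apply, smul_apply, smul_eq_mul, e2, v2]
    ring
  · have hg : ∀ x, HasDerivAt (fun x : ℝ => x / t) (1 / t) x := fun x =>
      (hasDerivAt_id x).div_const t
    obtain ⟨e1, e2⟩ := hasFDerivAt_comp_coords e _ _ _ _ T p (hg T) (hg p) (de _ hU)
    obtain ⟨v1, v2⟩ := hasFDerivAt_comp_coords v _ _ _ _ T p (hg T) (hg p) (dv _ hU)
    unfold heatCapacity
    rw [fderiv_const_mul e1]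
    simp only [smul_apply, smul_eq_mul, e2, v2]
    field_simp
  · have hg : HasDerivAt (fun x : ℝ => x) 1 T := hasDerivAt_id T
    have hh : HasDerivAt (fun x : ℝ => s * x) (s * 1) p := (hasDerivAt_id p).const_mul s
    obtain ⟨e1, e2⟩ := hasFDerivAt_comp_coords e _ _ _ _ T p hg hh (de _ hU)
    obtain ⟨v1, v2⟩ := hasFDerivAt_comp_coords v _ _ _ _ T p hg hh (dv _ hU)
    unfold heatCapacity
    rw [fderiv_const_mul v1]
    simp only [smul_apply, smul_eq_mul, e2, v2]
    ring
end

section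
/- Let U ⊆ {(T, p) ∈ ℝ² : T ≠ 0} be open, let e, v : U → ℝ be differentiable, and let t, s > 0. Define the transformed state ẽ(T, p) = t·e(T/t, s·p/t) and ṽ(T, p) = s·v(T/t, s·p/t) (the action of the scalings (e, v) ↦ (t·e, s·v), which induces (T, p) ↦ (t·T, t·p/s)). Then each of the five second-order functions e/T, p·v/T, e_T, e_T + p·v_T, and e_T − e_p·v_T/v_p is invariant: evaluating each of them on (ẽ, ṽ) at (T, p) gives its value on (e, v) at (T/t, s·p/t) (for the last function, at points where v_p ≠ 0). (The last two functions are the heat capacities at constant pressure and at constant volume, respectively; together with e/T, pv/T and e_T they generate the field of second-order differential invariants of the two-dimensional scaling group.) -/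
/-- The five second-order functions `e/T`, `p·v/T`, `e_T`, `e_T + p·v_T`
(heat capacity at constant pressure) and `e_T − e_p·v_T/v_p`
(heat capacity at constant volume) of a state `(e, v)`. -/
noncomputable def gasInv₁ (e v : ℝ × ℝ → ℝ) (q : ℝ × ℝ) : ℝ := e q / q.1
noncomputable def gasInv₂ (e v : ℝ × ℝ → ℝ) (q : ℝ × ℝ) : ℝ := q.2 * v q / q.1
noncomputable def gasInv₃ (e v : ℝ × ℝ → ℝ) (q : ℝ × ℝ) : ℝ := fderiv ℝ e q (1, 0)
noncomputable def gasInv₄ (e v : ℝ × ℝ → ℝ) (q : ℝ × ℝ) : ℝ :=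
  fderiv ℝ e q (1, 0) + q.2 * fderiv ℝ v q (1, 0)
noncomputable def gasInv₅ (e v : ℝ × ℝ → ℝ) (q : ℝ × ℝ) : ℝ :=
  fderiv ℝ e q (1, 0) - fderiv ℝ e q (0, 1) * fderiv ℝ v q (1, 0) / fderiv ℝ v q (0, 1)

/-- Chain rule for the rescaled functions. -/
lemma fderiv_scaled_aux (f : ℝ × ℝ → ℝ) (c t s T p : ℝ)
    (hf : DifferentiableAt ℝ f (T / t, s * p / t)) (a b : ℝ) :
    fderiv ℝ (fun q : ℝ × ℝ => c * f (q.1 / t, s * q.2 / t)) (T, p) (a, b) =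
      c * (a / t * fderiv ℝ f (T / t, s * p / t) (1, 0) +
        s * b / t * fderiv ℝ f (T / t, s * p / t) (0, 1)) := by
  let L : ℝ × ℝ →L[ℝ] ℝ × ℝ :=
    (t⁻¹ • ContinuousLinearMap.fst ℝ ℝ ℝ).prod ((s * t⁻¹) • ContinuousLinearMap.snd ℝ ℝ ℝ)
  have hL : ∀ q : ℝ × ℝ, L q = (q.1 / t, s * q.2 / t) := by
    intro q
    ext
    · simp [L, div_eq_mul_inv, mul_comm]
    · simp [L, div_eq_mul_inv]; ring
  have hf' : HasFDerivAt f (fderiv ℝ f (T / t, s * p / t)) (L (T, p)) := by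
    rw [hL]; exact hf.hasFDerivAt
  have h := (hf'.comp (T, p) L.hasFDerivAt).const_mul c
  have hfun : (fun q : ℝ × ℝ => c * f (q.1 / t, s * q.2 / t)) =
      fun q => c * (f ∘ L) q := by
    funext q
    simp only [Function.comp, hL]
  rw [hfun, h.fderiv]
  have hd : ((a / t, s * b / t) : ℝ × ℝ) =
      (a / t) • ((1, 0) : ℝ × ℝ) + (s * b / t) • ((0, 1) : ℝ × ℝ) := by
    ext <;> simp
  change c * (fderiv ℝ f (T / t, s * p / t)) (L (a, b)) = _
  rw [hL]
  simp only
  rw [hd, map_add, map_smul, map_smul, smul_eq_mul, smul_eq_mul]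

/-- For the action of the scalings `(e, v) ↦ (t·e, s·v)` on states, given by
`ẽ(T,p) = t·e(T/t, s·p/t)`, `ṽ(T,p) = s·v(T/t, s·p/t)`, each of the five
second-order functions `e/T`, `p·v/T`, `e_T`, `e_T + p·v_T` and
`e_T − e_p·v_T/v_p` is invariant: its value on `(ẽ, ṽ)` at `(T, p)` equals its
value on `(e, v)` at `(T/t, s·p/t)` (for the last one, where `v_p ≠ 0`). -/
theorem scaling_group_second_order_invariants (U : Set (ℝ × ℝ))
    (hUopen : IsOpen U) (hU : ∀ q ∈ U, q.1 ≠ 0)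
    (e v : ℝ × ℝ → ℝ)
    (he : DifferentiableOn ℝ e U) (hv : DifferentiableOn ℝ v U)
    (t s : ℝ) (ht : 0 < t) (hs : 0 < s)
    (et vt : ℝ × ℝ → ℝ)
    (het : et = fun q => t * e (q.1 / t, s * q.2 / t))
    (hvt : vt = fun q => s * v (q.1 / t, s * q.2 / t)) :
    ∀ T p : ℝ, (T / t, s * p / t) ∈ U →
      gasInv₁ et vt (T, p) = gasInv₁ e v (T / t, s * p / t) ∧
      gasInv₂ et vt (T, p) = gasInv₂ e v (T / t, s * p / t) ∧
      gasInv₃ et vt (T, p) = gasInv₃ e v (T / t, s * p / t) ∧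
      gasInv₄ et vt (T, p) = gasInv₄ e v (T / t, s * p / t) ∧
      (fderiv ℝ v (T / t, s * p / t) (0, 1) ≠ 0 →
        gasInv₅ et vt (T, p) = gasInv₅ e v (T / t, s * p / t)) := by
  intro T p hq
  have hT : T ≠ 0 := by
    intro h
    exact hU _ hq (by simp [h])
  have ht' := ht.ne'
  have hs' := hs.ne'
  have hE := fderiv_scaled_aux e t t s T p (he.differentiableAt (hUopen.mem_nhds hq))
  have hV := fderiv_scaled_aux v s t s T p (hv.differentiableAt (hUopen.mem_nhds hq))
  rw [← het] at hE
  rw [← hvt] at hV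
  refine ⟨?_, ?_, ?_, ?_, ?_⟩
  · simp only [gasInv₁, het]
    field_simp
  · simp only [gasInv₂, hvt]
    field_simp
  · simp only [gasInv₃, hE]
    field_simp
    ring
  · simp only [gasInv₄, hE, hV]
    field_simp
    ring
  · intro h
    simp only [gasInv₅, hE, hV]
    generalize fderiv ℝ v (T / t, s * p / t) (0, 1) = x at *
    generalize fderiv ℝ v (T / t, s * p / t) (1, 0) = y at *
    simp only [zero_div, zero_mul, mul_zero, zero_add, add_zero, mul_one]
    field_simp
end
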